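/- arXiv:1804.05682 — 2 statements merged into one kernel-verified Lean document; each statement's English description precedes it below -/
import Mathlib

section
/- For every L > 0 and every λ > 0 there exists a C^∞ function k : ℝ² → ℝ solving the kernel model (kEq) with parameter λ, i.e. k_{xxx}(x,y) + k_{yyy}(x,y) + k_y(x,y) + k_x(x,y) = -λ k(x,y) for all (x,y) with 0 ≤ y ≤ x ≤ L, k(x,x) = 0 and k(x,0) = 0 for all x ∈ [0,L], and (∂_x k)(x,x) = λx/3 for all x ∈ [0,L]. -/
open MeasureTheory Real

/-- Partial derivative in the first variable. -/
noncomputable def pd1 (f : ℝ × ℝ → ℝ) : ℝ × ℝ → ℝ := fun q => deriv (fun s => f (s, q.2)) q.1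

/-- Partial derivative in the second variable. -/
noncomputable def pd2 (f : ℝ × ℝ → ℝ) : ℝ × ℝ → ℝ := fun q => deriv (fun s => f (q.1, s)) q.2

/-- `k` solves the kernel model (kEq) with parameter `lam` on the triangle `Δ_L`. -/
def SolvesKEq (L lam : ℝ) (k : ℝ × ℝ → ℝ) : Prop :=
  (∀ x y : ℝ, 0 ≤ y → y ≤ x → x ≤ L →
      pd1 (pd1 (pd1 k)) (x, y) + pd2 (pd2 (pd2 k)) (x, y) + pd2 k (x, y) + pd1 k (x, y)
        = -lam * k (x, y)) ∧
  (∀ x : ℝ, 0 ≤ x → x ≤ L → k (x, x) = 0) ∧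
  (∀ x : ℝ, 0 ≤ x → x ≤ L → k (x, 0) = 0) ∧
  (∀ x : ℝ, 0 ≤ x → x ≤ L → pd1 k (x, x) = lam * x / 3)

/-!
In the coordinates `u = x - y`, `v = y` the equation reads `k_vvv - 3 k_uvv + 3 k_uuv + k_v = -λ k`,
and the boundary data are `k = 0` and `k_u = λ v / 3` on `u = 0`, and `k = 0` on `v = 0`. The term
`3 k_uuv` turns this into a recursion determining all Taylor coefficients of `k` at the origin, and
these grow at most geometrically in the order of the `u`-derivative. After rescaling they form a
vector `a` of `ℓ^∞(ℕ × ℕ)`, a space on which `∂_u` and `∂_v` act as commuting bounded shift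
operators `U` and `V`. Hence `k = ⟨δ₀₀, exp (u U + v V) a⟩` is analytic on the whole plane,
differentiating it amounts to applying `U` or `V` to `a`, and the equation for `k` is a linear
equation for `a`.
-/

open NormedSpace
open scoped BoundedContinuousFunction ContDiff

section Exponential

lemma hasDerivAt_exp_smul_add_of_commute {𝕜 𝔸 : Type*} [RCLike 𝕜] [NormedRing 𝔸]
    [NormedAlgebra 𝕜 𝔸] [CompleteSpace 𝔸] {A B : 𝔸} (h : Commute A B) (t : 𝕜) :
    HasDerivAt (fun s : 𝕜 => exp (s • A + B)) (exp (t • A + B) * A) t := by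
  have exp_smul_add (s : 𝕜) : exp (s • A + B) = exp (s • A) * exp B :=
    letI := NormedAlgebra.restrictScalars ℚ 𝕜 𝔸
    exp_add_of_commute (h.smul_left s)
  have hA : Commute A (exp B) := h.exp_right
  simpa only [exp_smul_add, mul_assoc, hA.eq] using
    (hasDerivAt_exp_smul_const A t).mul_const (exp B)

lemma hasSum_apply_exp_smul {𝕜 E F : Type*} [RCLike 𝕜] [NormedAddCommGroup E] [NormedSpace 𝕜 E]
    [CompleteSpace E] [NormedAddCommGroup F] [NormedSpace 𝕜 F]
    (φ : E →L[𝕜] F) (T : E →L[𝕜] E) (a : E) (t : 𝕜) :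
    HasSum (fun n : ℕ => ((n.factorial : 𝕜)⁻¹ * t ^ n) • φ (T^[n] a)) (φ (exp (t • T) a)) := by
  simpa [smul_pow, smul_smul] using
    φ.hasSum ((ContinuousLinearMap.apply 𝕜 E a).hasSum (exp_series_hasSum_exp' (𝕂 := 𝕜) (t • T)))

variable {E : Type*} [NormedAddCommGroup E] [NormedSpace ℝ E] [CompleteSpace E]

/-- The matrix coefficient `(x, y) ↦ φ (exp (x A + y B) a)` of the pair of operators `A`, `B`,
with respect to the functional `φ` and the vector `a`. -/
noncomputable def expMatrixCoeff (φ : E →L[ℝ] ℝ) (A B : E →L[ℝ] E) (a : E) (q : ℝ × ℝ) : ℝ :=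
  φ (exp (q.1 • A + q.2 • B) a)

variable (φ : E →L[ℝ] ℝ) {A B : E →L[ℝ] E} (a : E)

lemma contDiff_expMatrixCoeff : ContDiff ℝ ω (expMatrixCoeff φ A B a) := by
  have contDiff_exp : ContDiff ℝ ω (exp : (E →L[ℝ] E) → E →L[ℝ] E) :=
    AnalyticOnNhd.contDiff fun T _ => exp_analytic T
  unfold expMatrixCoeff
  fun_prop

lemma pd1_expMatrixCoeff (h : Commute A B) :
    pd1 (expMatrixCoeff φ A B a) = expMatrixCoeff φ A B (A a) := by
  funext q
  have hexp := hasDerivAt_exp_smul_add_of_commute (h.smul_right q.2) q.1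
  exact (φ.hasFDerivAt.comp_hasDerivAt q.1 (hexp.clm_apply (hasDerivAt_const q.1 a))).deriv.trans
    (by simp [expMatrixCoeff])

lemma pd2_expMatrixCoeff (h : Commute A B) :
    pd2 (expMatrixCoeff φ A B a) = expMatrixCoeff φ A B (B a) := by
  funext q
  have hexp := hasDerivAt_exp_smul_add_of_commute (h.symm.smul_right q.1) q.2
  simp only [add_comm _ (q.1 • A)] at hexp
  exact (φ.hasFDerivAt.comp_hasDerivAt q.2 (hexp.clm_apply (hasDerivAt_const q.2 a))).deriv.trans
    (by simp [expMatrixCoeff])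

lemma hasSum_expMatrixCoeff_diag (x : ℝ) :
    HasSum (fun n : ℕ => ((n.factorial : ℝ)⁻¹ * x ^ n) * φ ((A + B)^[n] a))
      (expMatrixCoeff φ A B a (x, x)) := by
  simpa [expMatrixCoeff] using hasSum_apply_exp_smul φ (A + B) a x

lemma hasSum_expMatrixCoeff_zero_right (x : ℝ) :
    HasSum (fun n : ℕ => ((n.factorial : ℝ)⁻¹ * x ^ n) * φ (A^[n] a))
      (expMatrixCoeff φ A B a (x, 0)) := by
  simpa [expMatrixCoeff] using hasSum_apply_exp_smul φ A a x

end Exponential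

/-- The Taylor coefficients `∂_u ^ i ∂_v ^ j k (0, 0)` of the kernel in the coordinates `u = x - y`,
`v = y`. The last clause is the coefficient of `u ^ i v ^ j / (i! j!)` in the equation, solved for
the term coming from `∂_u ^ 2 ∂_v k`. -/
noncomputable def kernelCoeff (lam : ℝ) : ℕ → ℕ → ℝ
  | 0, _ => 0
  | 1, j => if j = 1 then lam / 3 else 0
  | _ + 2, 0 => 0
  | i + 2, j + 1 => kernelCoeff lam (i + 1) (j + 2) -
      (kernelCoeff lam i (j + 3) + kernelCoeff lam i (j + 1) + lam * kernelCoeff lam i j) / 3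

section Kernel

variable (lam : ℝ)

lemma kernelCoeff_zero_right : ∀ i, kernelCoeff lam i 0 = 0
  | 0 | 1 | _ + 2 => by simp [kernelCoeff]

lemma abs_kernelCoeff_le : ∀ i j, |kernelCoeff lam i j| ≤ |lam| * (2 + |lam|) ^ i
  | 0, _ | _ + 2, 0 => by simp only [kernelCoeff, abs_zero]; positivity
  | 1, j => by
    have bound_one : |lam / 3| ≤ |lam| * (2 + |lam|) := by
      rw [abs_div, abs_of_pos (three_pos : (0 : ℝ) < 3)]
      nlinarith [abs_nonneg lam]
    rw [kernelCoeff, pow_one]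
    split_ifs
    · exact bound_one
    · simpa using (abs_nonneg _).trans bound_one
  | i + 2, j + 1 => by
    set R := 2 + |lam| with hR
    set P := |lam| * R ^ i with hP
    have bound (j : ℕ) : |kernelCoeff lam i j| ≤ P := abs_kernelCoeff_le i j
    have bound_succ : |kernelCoeff lam (i + 1) (j + 2)| ≤ R * P :=
      (abs_kernelCoeff_le (i + 1) (j + 2)).trans_eq (by rw [pow_succ]; ring)
    have bound_lower : |kernelCoeff lam i (j + 3) + kernelCoeff lam i (j + 1) +
        lam * kernelCoeff lam i j| ≤ R * P :=
      calc _ ≤ |kernelCoeff lam i (j + 3)| + |kernelCoeff lam i (j + 1)| +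
            |lam| * |kernelCoeff lam i j| := by rw [← abs_mul]; exact abs_add_three _ _ _
        _ ≤ P + P + |lam| * P := by gcongr <;> exact bound _
        _ = R * P := by rw [hR]; ring
    have hRP : 0 ≤ R * P := by positivity
    rw [kernelCoeff]
    calc _ ≤ R * P + R * P / 3 := by
          refine (abs_sub _ _).trans (add_le_add bound_succ ?_)
          rw [abs_div, abs_of_pos (three_pos : (0 : ℝ) < 3)]
          gcongr
      _ ≤ 2 * (R * P) := by linarith
      _ ≤ R * (R * P) := by gcongr; linarith [abs_nonneg lam]
      _ = |lam| * R ^ (i + 2) := by rw [hP]; ring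

/-- The Taylor coefficients of the kernel as a vector of `ℓ^∞(ℕ × ℕ)`, rescaled in `u` so as to be
bounded. -/
noncomputable def kernelVector : ℕ × ℕ →ᵇ ℝ :=
  .ofNormedAddCommGroupDiscrete (fun p => kernelCoeff lam p.1 p.2 / (2 + |lam|) ^ p.1) |lam|
    fun p => by
      have hpow : 0 < (2 + |lam|) ^ p.1 := by positivity
      rw [Real.norm_eq_abs, abs_div, abs_of_pos hpow, div_le_iff₀ hpow]
      exact abs_kernelCoeff_le lam p.1 p.2

lemma kernelVector_apply (i j : ℕ) :
    kernelVector lam (i, j) = kernelCoeff lam i j / (2 + |lam|) ^ i := rfl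

/-- The operator `∂_u` on bounded families of Taylor coefficients: the shift of the first index.
The factor `2 + |lam|` accounts for the rescaling in `kernelVector`. -/
noncomputable def derivU : (ℕ × ℕ →ᵇ ℝ) →L[ℝ] (ℕ × ℕ →ᵇ ℝ) :=
  (2 + |lam|) • BoundedContinuousFunction.compContinuousCLM ℝ ℝ
    ⟨Prod.map Nat.succ id, continuous_of_discreteTopology⟩

/-- The operator `∂_v` on bounded families of Taylor coefficients: the shift of the second index. -/
noncomputable def derivV : (ℕ × ℕ →ᵇ ℝ) →L[ℝ] (ℕ × ℕ →ᵇ ℝ) :=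
  BoundedContinuousFunction.compContinuousCLM ℝ ℝ
    ⟨Prod.map id Nat.succ, continuous_of_discreteTopology⟩

lemma derivU_apply (a : ℕ × ℕ →ᵇ ℝ) (i j : ℕ) :
    derivU lam a (i, j) = (2 + |lam|) * a (i + 1, j) := rfl

lemma derivV_apply (a : ℕ × ℕ →ᵇ ℝ) (i j : ℕ) : derivV a (i, j) = a (i, j + 1) := rfl

lemma derivU_iterate_apply (n : ℕ) (a : ℕ × ℕ →ᵇ ℝ) (i j : ℕ) :
    (derivU lam)^[n] a (i, j) = (2 + |lam|) ^ n * a (i + n, j) := by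
  induction n generalizing a with
  | zero => simp
  | succ n ih => rw [Function.iterate_succ_apply, ih, derivU_apply, pow_succ, mul_assoc]; rfl

lemma derivV_iterate_apply (n : ℕ) (a : ℕ × ℕ →ᵇ ℝ) (i j : ℕ) :
    derivV^[n] a (i, j) = a (i, j + n) := by
  induction n generalizing a with
  | zero => rfl
  | succ n ih => rw [Function.iterate_succ_apply, ih, derivV_apply]; rfl

/-- The solution of the kernel model; here `∂_x = ∂_u` and `∂_y = ∂_v - ∂_u`. -/
noncomputable def kernel : ℝ × ℝ → ℝ :=
  expMatrixCoeff (BoundedContinuousFunction.evalCLM ℝ (0, 0)) (derivU lam) (derivV - derivU lam)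
    (kernelVector lam)

lemma commute_derivU_derivV_sub_derivU : Commute (derivU lam) (derivV - derivU lam) := by
  ext a ⟨i, j⟩
  simp [derivU_apply, derivV_apply]

lemma kernelVector_equation :
    let A := derivU lam
    let B := derivV - derivU lam
    A (A (A (kernelVector lam))) + B (B (B (kernelVector lam))) + B (kernelVector lam) +
      A (kernelVector lam) = -lam • kernelVector lam := by
  ext ⟨i, j⟩
  simp only [sub_apply, map_sub, BoundedContinuousFunction.coe_add, Pi.add_apply,
    BoundedContinuousFunction.coe_sub, Pi.sub_apply, BoundedContinuousFunction.coe_smul,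
    smul_eq_mul, derivU_apply, derivV_apply, kernelVector_apply, kernelCoeff]
  field_simp
  ring

lemma contDiff_kernel : ContDiff ℝ ω (kernel lam) :=
  contDiff_expMatrixCoeff _ _

lemma kernel_equation (q : ℝ × ℝ) :
    pd1 (pd1 (pd1 (kernel lam))) q + pd2 (pd2 (pd2 (kernel lam))) q + pd2 (kernel lam) q +
      pd1 (kernel lam) q = -lam * kernel lam q := by
  have h := commute_derivU_derivV_sub_derivU lam
  simp only [kernel, pd1_expMatrixCoeff _ _ h, pd2_expMatrixCoeff _ _ h]
  simp only [expMatrixCoeff, ← map_add, kernelVector_equation lam, map_smul, smul_eq_mul]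

lemma kernel_diag (x : ℝ) : kernel lam (x, x) = 0 := by
  refine (hasSum_expMatrixCoeff_diag _ _ x).unique ?_
  simp [derivV_iterate_apply, kernelVector_apply, kernelCoeff]

lemma kernel_zero_right (x : ℝ) : kernel lam (x, 0) = 0 := by
  refine (hasSum_expMatrixCoeff_zero_right _ _ x).unique ?_
  simp [derivU_iterate_apply, kernelVector_apply, kernelCoeff_zero_right]

lemma pd1_kernel_diag (x : ℝ) : pd1 (kernel lam) (x, x) = lam * x / 3 := by
  have hR : 2 + |lam| ≠ 0 := by positivity
  have coeff (n : ℕ) : derivV^[n] (derivU lam (kernelVector lam)) (0, 0) =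
      if n = 1 then lam / 3 else 0 := by
    rw [derivV_iterate_apply, derivU_apply, kernelVector_apply, zero_add, zero_add, pow_one,
      mul_div_cancel₀ _ hR, kernelCoeff]
  rw [kernel, pd1_expMatrixCoeff _ _ (commute_derivU_derivV_sub_derivU lam),
    ← (hasSum_expMatrixCoeff_diag _ _ x).tsum_eq]
  simp only [add_sub_cancel, BoundedContinuousFunction.evalCLM_apply, coeff, mul_ite, mul_zero,
    tsum_ite_eq, Nat.factorial_one, Nat.cast_one, inv_one, pow_one, one_mul]
  ring

end Kernel

theorem stmt_0_general (lam : ℝ) :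
    ∃ k : ℝ × ℝ → ℝ, ContDiff ℝ ω k ∧
      (∀ q, pd1 (pd1 (pd1 k)) q + pd2 (pd2 (pd2 k)) q + pd2 k q + pd1 k q = -lam * k q) ∧
      (∀ x, k (x, x) = 0) ∧ (∀ x, k (x, 0) = 0) ∧ (∀ x, pd1 k (x, x) = lam * x / 3) :=
  ⟨kernel lam, contDiff_kernel lam, kernel_equation lam, kernel_diag lam, kernel_zero_right lam,
    pd1_kernel_diag lam⟩

/-- for every `L > 0` and `λ > 0` there is a `C^∞` solution of (kEq). -/
theorem stmt_0 (L lam : ℝ) (hL : 0 < L) (hlam : 0 < lam) :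
    ∃ k : ℝ × ℝ → ℝ, ContDiff ℝ (⊤ : ℕ∞) k ∧ SolvesKEq L lam k := by
  obtain ⟨k, hk, heq, hdiag, hzero, htrace⟩ := stmt_0_general lam
  exact ⟨k, hk.of_le le_top, fun x y _ _ _ => heq (x, y), fun x _ _ => hdiag x,
    fun x _ _ => hzero x, fun x _ _ => htrace x⟩
end

section
/- For every L > 0 and every λ̃ > 0 there exists a C^∞ function p : ℝ² → ℝ solving the observer kernel model (p-model) with parameter λ̃, i.e. p_{xxx}(x,y) + p_{yyy}(x,y) + p_x(x,y) + p_y(x,y) = λ̃ p(x,y) for all (x,y) with 0 ≤ y ≤ x ≤ L, p(L,y) = 0 for all y ∈ [0,L], p(x,x) = 0 for all x ∈ [0,L], and (∂_x p)(x,x) = -λ̃(x-L)/3 for all x ∈ [0,L]. -/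
open MeasureTheory Real

/-- `p` solves the observer kernel model (p-model) with parameter `lt` on the triangle `Δ_L`. -/
def SolvesPEq (L lt : ℝ) (p : ℝ × ℝ → ℝ) : Prop :=
  (∀ x y : ℝ, 0 ≤ y → y ≤ x → x ≤ L →
      pd1 (pd1 (pd1 p)) (x, y) + pd2 (pd2 (pd2 p)) (x, y) + pd1 p (x, y) + pd2 p (x, y)
        = lt * p (x, y)) ∧
  (∀ y : ℝ, 0 ≤ y → y ≤ L → p (L, y) = 0) ∧
  (∀ x : ℝ, 0 ≤ x → x ≤ L → p (x, x) = 0) ∧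
  (∀ x : ℝ, 0 ≤ x → x ≤ L → pd1 p (x, x) = -(lt * (x - L)) / 3)

/-!
Put `s = L - x`, `t = x - y` and `p (x, y) = G (s, t)`. The equation turns into
`3 G_stt = 3 G_sst - G_sss - G_s - λ̃ G`, and the side conditions into `G (0, t) = 0`,
`G (s, 0) = 0` and `G_t (s, 0) = λ̃ s / 3`. With `W = G_s`, so that `G = ∫₀ˢ W`, this is a Cauchy
problem of second order in `t`,
`W_tt = W_st - (W_ss + W + λ̃ ∫₀ˢ W) / 3`, `W (s, 0) = 0`, `W_t (s, 0) = λ̃ / 3`.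
On the space of power series in `s` whose derivatives at `0` are bounded, both `∂_s` and `∫₀ˢ` are
bounded operators (the two shifts of the derivative sequence), so the Cauchy problem is a linear
ordinary differential equation with bounded coefficients, solved by an operator exponential.
-/

open scoped BoundedContinuousFunction ContDiff Nat

theorem contDiff_exp_smul_const {𝕜 A : Type*} [RCLike 𝕜] [NormedRing A] [NormedAlgebra 𝕜 A]
    [CompleteSpace A] (a : A) (n : WithTop ℕ∞) :
    ContDiff 𝕜 n fun t : 𝕜 => NormedSpace.exp (t • a) :=
  (contDiff_iff_contDiffAt.2 fun b => (NormedSpace.exp_analytic (𝕂 := 𝕜) b).contDiffAt).comp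
    (contDiff_id.smul contDiff_const)

/-- The equation of the `p`-model with `c` for `λ̃`, on the whole plane. -/
def SolvesKernelPDE (c : ℝ) (p : ℝ × ℝ → ℝ) : Prop :=
  ∀ q, pd1 (pd1 (pd1 p)) q + pd2 (pd2 (pd2 p)) q + pd1 p q + pd2 p q = c * p q

section ExpKernel

variable {E F : Type*} [NormedAddCommGroup E] [NormedSpace ℝ E]
  [NormedAddCommGroup F] [NormedSpace ℝ F]

/-- The function `(x, y) ↦ ℓ (e^{(L - x) B} J e^{(x - y) C} v)` built from two one-parameter groups
of operators. With `s = L - x` and `t = x - y`, `∂_s` replaces `J` by `B ∘L J` and `∂_t` replaces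
it by `J ∘L C`, so that differential equations become identities between operators. -/
noncomputable def expKernel (B : E →L[ℝ] E) (C : F →L[ℝ] F) (ℓ : E →L[ℝ] ℝ) (v : F) (L : ℝ)
    (J : F →L[ℝ] E) : ℝ × ℝ → ℝ :=
  fun q => ℓ (NormedSpace.exp ((L - q.1) • B) (J (NormedSpace.exp ((q.1 - q.2) • C) v)))

variable (B : E →L[ℝ] E) (C : F →L[ℝ] F) (ℓ : E →L[ℝ] ℝ) (v : F) (L : ℝ) (J : F →L[ℝ] E)

theorem expKernel_apply_left (y : ℝ) :
    expKernel B C ℓ v L J (L, y) = ℓ (J (NormedSpace.exp ((L - y) • C) v)) := by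
  simp [expKernel]

theorem expKernel_apply_diag (x : ℝ) :
    expKernel B C ℓ v L J (x, x) = ℓ (NormedSpace.exp ((L - x) • B) (J v)) := by
  simp [expKernel]

variable [CompleteSpace F]

theorem pd2_expKernel :
    pd2 (expKernel B C ℓ v L J) = expKernel B C ℓ v L (-(J ∘L C)) := by
  ext ⟨x, y⟩
  have hC : HasDerivAt (fun s => NormedSpace.exp ((x - s) • C))
      (-(C * NormedSpace.exp ((x - y) • C))) y :=
    (hasDerivAt_exp_smul_const' C (x - y)).comp_const_sub x y
  have hCv : HasDerivAt (fun s => NormedSpace.exp ((x - s) • C) v)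
      (-(C (NormedSpace.exp ((x - y) • C) v))) y := by
    simpa using hC.clm_apply (hasDerivAt_const y v)
  let K := ℓ ∘L NormedSpace.exp ((L - x) • B) ∘L J
  refine (K.hasFDerivAt.comp_hasDerivAt y hCv).deriv.trans ?_
  simp [expKernel, K]

variable [CompleteSpace E]

theorem contDiff_expKernel (n : WithTop ℕ∞) : ContDiff ℝ n (expKernel B C ℓ v L J) :=
  ℓ.contDiff.comp <|
    ((contDiff_exp_smul_const B n).comp (contDiff_const.sub contDiff_fst)).clm_apply <|
      J.contDiff.comp <|
        ((contDiff_exp_smul_const C n).comp (contDiff_fst.sub contDiff_snd)).clm_apply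
          contDiff_const

theorem pd1_expKernel :
    pd1 (expKernel B C ℓ v L J) = expKernel B C ℓ v L (J ∘L C - B ∘L J) := by
  ext ⟨x, y⟩
  have hB : HasDerivAt (fun s => NormedSpace.exp ((L - s) • B))
      (-(NormedSpace.exp ((L - x) • B) * B)) x :=
    (hasDerivAt_exp_smul_const B (L - x)).comp_const_sub L x
  have hC : HasDerivAt (fun s => NormedSpace.exp ((s - y) • C))
      (C * NormedSpace.exp ((x - y) • C)) x :=
    (hasDerivAt_exp_smul_const' C (x - y)).comp_sub_const x y
  have hCv : HasDerivAt (fun s => NormedSpace.exp ((s - y) • C) v)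
      (C (NormedSpace.exp ((x - y) • C) v)) x := by
    simpa using hC.clm_apply (hasDerivAt_const x v)
  have hJ := J.hasFDerivAt.comp_hasDerivAt x hCv
  refine (ℓ.hasFDerivAt.comp_hasDerivAt x (hB.clm_apply hJ)).deriv.trans ?_
  simp [expKernel, neg_add_eq_sub]

theorem solvesKernelPDE_expKernel {c : ℝ}
    (h : (3 : ℝ) • (B ∘L J ∘L C ∘L C)
      = (3 : ℝ) • (B ∘L B ∘L J ∘L C) - B ∘L B ∘L B ∘L J - B ∘L J - c • J) :
    SolvesKernelPDE c (expKernel B C ℓ v L J) := by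
  intro q
  have hq := congrArg (fun K : F →L[ℝ] E => expKernel B C ℓ v L K q) h
  simp only [pd1_expKernel, pd2_expKernel, expKernel, ContinuousLinearMap.comp_apply,
    ContinuousLinearMap.comp_sub, ContinuousLinearMap.sub_comp, ContinuousLinearMap.neg_comp,
    neg_neg, smul_apply, sub_apply, neg_apply, map_smul, map_sub, map_neg, smul_eq_mul] at hq ⊢
  linear_combination -hq

end ExpKernel

section DerivSeq

variable {V : Type*} [NormedAddCommGroup V] [NormedSpace ℝ V]

/-- Differentiation `∂_s`, where a bounded sequence `a` encodes the entire function
`∑ₙ sⁿ aₙ / n!` through its derivatives at `0`. -/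
noncomputable def derivSeq : (ℕ →ᵇ V) →L[ℝ] (ℕ →ᵇ V) :=
  BoundedContinuousFunction.compContinuousCLM V ℝ ⟨Nat.succ, continuous_of_discreteTopology⟩

/-- Integration `∫₀ˢ`, in the encoding of `derivSeq`. -/
noncomputable def integralSeq : (ℕ →ᵇ V) →L[ℝ] (ℕ →ᵇ V) where
  toFun a := a.extend ⟨Nat.succ, Nat.succ_injective⟩ 0
  map_add' a b := DFunLike.coe_injective <| by
    have h := Function.extend_add Nat.succ a b 0 0
    rw [add_zero] at h
    exact h
  map_smul' c a := DFunLike.coe_injective <| by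
    have h := Function.extend_smul c Nat.succ a 0
    rw [smul_zero] at h
    exact h
  cont := (BoundedContinuousFunction.isometry_extend _ _).continuous

@[simp]
theorem derivSeq_apply (a : ℕ →ᵇ V) (n : ℕ) : derivSeq a n = a (n + 1) := rfl

@[simp]
theorem integralSeq_apply_zero (a : ℕ →ᵇ V) : integralSeq a 0 = 0 :=
  Function.extend_apply' _ _ _ (by simp)

@[simp]
theorem integralSeq_apply_succ (a : ℕ →ᵇ V) (n : ℕ) : integralSeq a (n + 1) = a n :=
  Nat.succ_injective.extend_apply _ _ n

@[simp]
theorem derivSeq_integralSeq (a : ℕ →ᵇ V) : derivSeq (integralSeq a) = a := by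
  ext n
  simp

theorem derivSeq_iterate_apply_zero (n : ℕ) (a : ℕ →ᵇ V) : derivSeq^[n] a 0 = a n := by
  induction n generalizing a with
  | zero => rfl
  | succ n ih => rw [Function.iterate_succ_apply, ih, derivSeq_apply]

theorem hasSum_exp_smul_derivSeq [CompleteSpace V] (s : ℝ) (a : ℕ →ᵇ V) :
    HasSum (fun n => (s ^ n / n !) • a n)
      (NormedSpace.exp (s • (derivSeq : (ℕ →ᵇ V) →L[ℝ] _)) a 0) := by
  have hexp := NormedSpace.exp_series_hasSum_exp' (𝕂 := ℝ) (s • (derivSeq : (ℕ →ᵇ V) →L[ℝ] _))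
  have heval := (BoundedContinuousFunction.evalCLM ℝ 0 ∘L
    ContinuousLinearMap.apply ℝ (ℕ →ᵇ V) a).hasSum hexp
  convert! heval using 2 with n
  simp [smul_pow, derivSeq_iterate_apply_zero, smul_smul, div_eq_inv_mul]

end DerivSeq

section ObserverKernel

/-- The first-order system in `t` for the pair `(W, W_t)` that is equivalent to
`W_tt = W_st - (W_ss + W + c ∫₀ˢ W) / 3`. -/
noncomputable def cauchyGenerator (c : ℝ) :
    (ℕ →ᵇ ℝ) × (ℕ →ᵇ ℝ) →L[ℝ] (ℕ →ᵇ ℝ) × (ℕ →ᵇ ℝ) :=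
  let W := ContinuousLinearMap.fst ℝ (ℕ →ᵇ ℝ) (ℕ →ᵇ ℝ)
  let Wt := ContinuousLinearMap.snd ℝ (ℕ →ᵇ ℝ) (ℕ →ᵇ ℝ)
  Wt.prod (derivSeq ∘L Wt
    - (1 / 3 : ℝ) • (derivSeq ∘L derivSeq ∘L W + W + c • integralSeq ∘L W))

/-- The solution `p (x, y) = G (L - x, x - y)`, `G = ∫₀ˢ W`, that belongs to the Cauchy data
`W = 0`, `W_t = a` at `t = 0`. -/
noncomputable def observerKernel (L c : ℝ) (a : ℕ →ᵇ ℝ) : ℝ × ℝ → ℝ :=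
  expKernel derivSeq (cauchyGenerator c) (BoundedContinuousFunction.evalCLM ℝ 0) (0, a) L
    (integralSeq ∘L ContinuousLinearMap.fst ℝ _ _)

variable (L c : ℝ) (a : ℕ →ᵇ ℝ)

theorem contDiff_observerKernel (n : WithTop ℕ∞) : ContDiff ℝ n (observerKernel L c a) :=
  contDiff_expKernel ..

theorem solvesKernelPDE_observerKernel : SolvesKernelPDE c (observerKernel L c a) := by
  refine solvesKernelPDE_expKernel _ _ _ _ _ _ (ContinuousLinearMap.ext fun z => ?_)
  simp only [cauchyGenerator, ContinuousLinearMap.comp_apply, ContinuousLinearMap.prod_apply,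
    ContinuousLinearMap.coe_fst', ContinuousLinearMap.coe_snd', smul_apply, add_apply, sub_apply,
    map_smul, map_add, map_sub, derivSeq_integralSeq]
  module

theorem observerKernel_apply_left (y : ℝ) : observerKernel L c a (L, y) = 0 := by
  simp [observerKernel, expKernel_apply_left]

theorem observerKernel_apply_diag (x : ℝ) : observerKernel L c a (x, x) = 0 := by
  simp [observerKernel, expKernel_apply_diag]

theorem hasSum_pd1_observerKernel_diag (x : ℝ) :
    HasSum (fun n => (L - x) ^ (n + 1) / (n + 1)! * a n) (pd1 (observerKernel L c a) (x, x)) := by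
  have hderiv : pd1 (observerKernel L c a) (x, x)
      = NormedSpace.exp ((L - x) • derivSeq) (integralSeq a) 0 := by
    simp [observerKernel, pd1_expKernel, expKernel_apply_diag, cauchyGenerator]
  rw [hderiv]
  simpa using (hasSum_nat_add_iff' 1).2 (hasSum_exp_smul_derivSeq (L - x) (integralSeq a))

end ObserverKernel

theorem stmt_1_general (L lt : ℝ) :
    ∃ p : ℝ × ℝ → ℝ, ContDiff ℝ ω p ∧ SolvesKernelPDE lt p ∧
      (∀ y, p (L, y) = 0) ∧
      (∀ x, p (x, x) = 0) ∧
      (∀ x, pd1 p (x, x) = -(lt * (x - L)) / 3) := by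
  let a : ℕ →ᵇ ℝ := (lt / 3) • BoundedContinuousFunction.indicator {0} (isClopen_discrete _)
  refine ⟨observerKernel L lt a, contDiff_observerKernel .., solvesKernelPDE_observerKernel L lt a,
    observerKernel_apply_left L lt a, observerKernel_apply_diag L lt a, fun x => ?_⟩
  have hsingle := hasSum_single (f := fun n => (L - x) ^ (n + 1) / (n + 1)! * a n) 0
    fun n hn => by simp [a, hn]
  rw [(hasSum_pd1_observerKernel_diag L lt a x).unique hsingle]
  simp [a]
  ring

/-- for every `L > 0` and `λ̃ > 0` there is a `C^∞` solution of the p-model. -/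
theorem stmt_1 (L lt : ℝ) (hL : 0 < L) (hlt : 0 < lt) :
    ∃ p : ℝ × ℝ → ℝ, ContDiff ℝ (⊤ : ℕ∞) p ∧ SolvesPEq L lt p := by
  obtain ⟨p, hsmooth, hpde, hleft, hdiag, hpd1⟩ := stmt_1_general L lt
  exact ⟨p, hsmooth.of_le le_top, fun x y _ _ _ => hpde (x, y), fun y _ _ => hleft y,
    fun x _ _ => hdiag x, fun x _ _ => hpd1 x⟩
end
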